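/- For every level a ∈ {1,…,K} with m_a > 0 and every pair of sites i < j, the normalized weight f_a satisfies, for each fixed realization of the disorder, the derivative identity ∂_{J_{ij}} f_a = β√(t/N) m_a f_a ( ω̃_a(σ_i σ_j) − ω̃_{a−1}(σ_i σ_j) ), where ω̃_a are the partially averaged Gibbs states. -/

import Mathlib

open MeasureTheory ProbabilityTheory Filter

noncomputable section

/-! ## Gaussian disorder -/

/-- The standard (centered, unit variance) Gaussian measure on `ℝ`. -/
def stdGauss : Measure ℝ := gaussianReal 0 1

instance : IsProbabilityMeasure stdGauss := by unfold stdGauss; infer_instance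

/-- `N` i.i.d. standard Gaussian variables. -/
def gaussN (N : ℕ) : Measure (Fin N → ℝ) := Measure.pi fun _ => stdGauss

instance (N : ℕ) : IsProbabilityMeasure (gaussN N) := by unfold gaussN; infer_instance

/-- The i.i.d. standard Gaussian couplings `J_{ij}` (only entries with `i < j` are used). -/
def gaussC (N : ℕ) : Measure (Fin N → Fin N → ℝ) := Measure.pi fun _ => gaussN N

instance (N : ℕ) : IsProbabilityMeasure (gaussC N) := by unfold gaussC; infer_instance

/-- The i.i.d. standard Gaussian one-body fields `J_i^a`, `a = 1, …, K`
(row `⟨a-1⟩ : Fin K` corresponds to the level `a` of the paper). -/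
def gaussS (K N : ℕ) : Measure (Fin K → Fin N → ℝ) := Measure.pi fun _ => gaussN N

instance (K N : ℕ) : IsProbabilityMeasure (gaussS K N) := by unfold gaussS; infer_instance

/-- I.i.d. standard Gaussian couplings indexed by subsets of sites, for the p-spin model
(only the cardinality-`p` subsets are used). -/
def gaussP (N : ℕ) : Measure (Finset (Fin N) → ℝ) := Measure.pi fun _ => stdGauss

instance (N : ℕ) : IsProbabilityMeasure (gaussP N) := by unfold gaussP; infer_instance

/-! ## Spins and overlaps -/

/-- The spin value (`±1`) of a Boolean configuration entry. -/
def spin (b : Bool) : ℝ := if b then 1 else -1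

/-- The overlap `q₁₂ = N⁻¹ ∑ᵢ σᵢ⁽¹⁾ σᵢ⁽²⁾` of two replicas. -/
def overlap (N : ℕ) (σ τ : Fin N → Bool) : ℝ := (N : ℝ)⁻¹ * ∑ i, spin (σ i) * spin (τ i)

/-! ## Piecewise constant functional order parameters and the Parisi function -/

/-- One backward step of the Parisi recursion on an interval of constancy of the
functional order parameter: from `g = f(q_a, ·)`, with value `m` of the order parameter
and `s = q_a - q`, produce `f(q, ·)`. -/
def pStep (m s : ℝ) (g : ℝ → ℝ) (y : ℝ) : ℝ :=
  if m = 0 then ∫ z, g (y + z * Real.sqrt s) ∂stdGauss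
  else m⁻¹ * Real.log (∫ z, Real.exp (m * g (y + z * Real.sqrt s)) ∂stdGauss)

/-- `parisiLevel K q m β j` is the Parisi function `f(q_{K-j}, ·; x, β)` at the node
`q_{K-j}`, obtained by `j` backward steps from the final condition `f(q_K, y) = log cosh (β y)`. -/
def parisiLevel (K : ℕ) (q m : ℕ → ℝ) (β : ℝ) : ℕ → ℝ → ℝ
  | 0 => fun y => Real.log (Real.cosh (β * y))
  | j + 1 => pStep (m (K - j)) (q (K - j) - q (K - j - 1)) (parisiLevel K q m β j)

/-- The Parisi function `f(r, y; x, β)` for a piecewise constant order parameter `x`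
given by nodes `q` and values `m`:  for `q_{a-1} ≤ r ≤ q_a` it is obtained from
`f(q_a, ·)` by one backward step with value `m_a` over a time `q_a - r`. -/
def parisiF (K : ℕ) (q m : ℕ → ℝ) (β : ℝ) (r y : ℝ) : ℝ :=
  pStep (m (sInf {a : ℕ | r ≤ q a})) (q (sInf {a : ℕ | r ≤ q a}) - r)
    (parisiLevel K q m β (K - sInf {a : ℕ | r ≤ q a})) y

/-- The functional order parameter as a function: `x(r) = m_a` for `q_{a-1} ≤ r < q_a`,
and `x(1) = m_K`. -/
def xFun (K : ℕ) (q m : ℕ → ℝ) (r : ℝ) : ℝ :=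
  if 1 ≤ r then m K else m (sInf {a : ℕ | r < q a})

/-- A piecewise constant functional order parameter:
`0 = q_0 ≤ q_1 ≤ … ≤ q_K = 1`, `0 ≤ m_1 ≤ … ≤ m_K ≤ 1`,
with the conventions `m_0 = 0`, `m_{K+1} = 1`. -/
structure OrderParam where
  K : ℕ
  hK : 1 ≤ K
  q : ℕ → ℝ
  m : ℕ → ℝ
  hq0 : q 0 = 0
  hqK : q K = 1
  hq_mono : ∀ a, a < K → q a ≤ q (a + 1)
  hm0 : m 0 = 0
  hmtop : m (K + 1) = 1
  hm1 : 0 ≤ m 1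
  hm_mono : ∀ a, 1 ≤ a → a < K → m a ≤ m (a + 1)
  hmK : m K ≤ 1

/-- Guerra's trial function `ᾱ(β, h; x) = log 2 + f(0, h; x, β) - (β²/2) ∫₀¹ r x(r) dr`. -/
def trialAlpha (K : ℕ) (q m : ℕ → ℝ) (β h : ℝ) : ℝ :=
  Real.log 2 + parisiLevel K q m β K h - β ^ 2 / 2 * ∫ r in (0 : ℝ)..1, r * xFun K q m r

/-! ## The Sherrington–Kirkpatrick model -/

/-- The SK Hamiltonian `H_N(σ, h, J) = -(1/√N) ∑_{i<j} J_{ij} σ_i σ_j - h ∑_i σ_i`. -/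
def hamSK (N : ℕ) (h : ℝ) (Jc : Fin N → Fin N → ℝ) (σ : Fin N → Bool) : ℝ :=
  -(1 / Real.sqrt N) * ∑ i, ∑ j, (if i < j then Jc i j * spin (σ i) * spin (σ j) else 0)
    - h * ∑ i, spin (σ i)

/-- The SK partition function `Z_N(β, h, J)`. -/
def ZSK (N : ℕ) (β h : ℝ) (Jc : Fin N → Fin N → ℝ) : ℝ :=
  ∑ σ : Fin N → Bool, Real.exp (-(β * hamSK N h Jc σ))

/-- The quenched average `N⁻¹ E log Z_N(β, h, J)`. -/
def quenchedFE (N : ℕ) (β h : ℝ) : ℝ :=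
  (N : ℝ)⁻¹ * ∫ Jc, Real.log (ZSK N β h Jc) ∂gaussC N

/-- The ground state energy density `e_N(J, h)`, defined by
`-e_N(J, h) = N⁻¹ min_σ H_N(σ, h, J)`. -/
def eGS (N : ℕ) (h : ℝ) (Jc : Fin N → Fin N → ℝ) : ℝ :=
  -((N : ℝ)⁻¹ * ⨅ σ : Fin N → Bool, hamSK N h Jc σ)

/-- The quenched ground state energy density `e_N(h) = E(e_N(J, h))`. -/
def eQuenched (N : ℕ) (h : ℝ) : ℝ := ∫ Jc, eGS N h Jc ∂gaussC N

/-! ## The interpolating system -/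

/-- The interpolating Boltzmann factor. -/
def bFac (N K : ℕ) (β h t : ℝ) (q : ℕ → ℝ) (Jc : Fin N → Fin N → ℝ)
    (Js : Fin K → Fin N → ℝ) (σ : Fin N → Bool) : ℝ :=
  Real.exp (β * Real.sqrt (t / N) *
        ∑ i, ∑ j, (if i < j then Jc i j * spin (σ i) * spin (σ j) else 0)
      + β * h * ∑ i, spin (σ i)
      + β * Real.sqrt (1 - t) *
          ∑ a : Fin K, Real.sqrt (q (a.val + 1) - q a.val) * ∑ i, Js a i * spin (σ i))

/-- The interpolating partition function `Z̃_N(β, h; t; x; J)`. -/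
def Ztil (N K : ℕ) (β h t : ℝ) (q : ℕ → ℝ) (Jc : Fin N → Fin N → ℝ)
    (Js : Fin K → Fin N → ℝ) : ℝ :=
  ∑ σ : Fin N → Bool, bFac N K β h t q Jc Js σ

/-- `Wrec … j` is the random variable `Z_{K-j}`:  `Z_K = Z̃_N` and
`Z_{a-1} = (E_a (Z_a^{m_a}))^{1/m_a}`, where `E_a` integrates the Gaussian row `J^a`. -/
def Wrec (N K : ℕ) (β h t : ℝ) (q m : ℕ → ℝ) :
    ℕ → (Fin N → Fin N → ℝ) → (Fin K → Fin N → ℝ) → ℝ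
  | 0 => Ztil N K β h t q
  | j + 1 => fun Jc Js =>
      if hj : j < K then
        (∫ g : Fin N → ℝ,
            (Wrec N K β h t q m j Jc (Function.update Js ⟨K - 1 - j, by omega⟩ g)) ^ m (K - j)
          ∂gaussN N) ^ (m (K - j))⁻¹
      else Wrec N K β h t q m j Jc Js

/-- `Zrec … a` is the random variable `Z_a` of the broken replica interpolation. -/
def Zrec (N K : ℕ) (β h t : ℝ) (q m : ℕ → ℝ) (a : ℕ) :
    (Fin N → Fin N → ℝ) → (Fin K → Fin N → ℝ) → ℝ :=
  Wrec N K β h t q m (K - a)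

/-- The interpolating auxiliary function `α̃_N(t) = N⁻¹ E₀ log Z₀`. -/
def atilde (N K : ℕ) (β h : ℝ) (q m : ℕ → ℝ) (t : ℝ) : ℝ :=
  (N : ℝ)⁻¹ * ∫ Jc, Real.log (Wrec N K β h t q m K Jc 0) ∂gaussC N

/-- The normalized weight `f_a = Z_a^{m_a} / E_a(Z_a^{m_a}) = Z_a^{m_a} / Z_{a-1}^{m_a}`. -/
def fWeight (N K : ℕ) (β h t : ℝ) (q m : ℕ → ℝ) (a : ℕ) (Jc : Fin N → Fin N → ℝ)
    (Js : Fin K → Fin N → ℝ) : ℝ :=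
  Zrec N K β h t q m a Jc Js ^ m a / Zrec N K β h t q m (a - 1) Jc Js ^ m a

/-- The Gibbs expectation `ω(A)` of the interpolating Boltzmann factor. -/
def gibbs (N K : ℕ) (β h t : ℝ) (q : ℕ → ℝ) (A : (Fin N → Bool) → ℝ)
    (Jc : Fin N → Fin N → ℝ) (Js : Fin K → Fin N → ℝ) : ℝ :=
  (∑ σ : Fin N → Bool, A σ * bFac N K β h t q Jc Js σ) / Ztil N K β h t q Jc Js

/-- The two-replica Gibbs product expectation `Ω(A)`. -/
def gibbs2 (N K : ℕ) (β h t : ℝ) (q : ℕ → ℝ) (A : (Fin N → Bool) → (Fin N → Bool) → ℝ)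
    (Jc : Fin N → Fin N → ℝ) (Js : Fin K → Fin N → ℝ) : ℝ :=
  (∑ σ : Fin N → Bool, ∑ τ : Fin N → Bool,
      A σ τ * bFac N K β h t q Jc Js σ * bFac N K β h t q Jc Js τ) /
    Ztil N K β h t q Jc Js ^ 2

/-- `omT1 … A j` is the partially averaged state `ω̃_{K-j}(A)`:
`ω̃_K = ω` and `ω̃_{a-1}(·) = E_a (f_a ω̃_a(·))`. -/
def omT1 (N K : ℕ) (β h t : ℝ) (q m : ℕ → ℝ) (A : (Fin N → Bool) → ℝ) :
    ℕ → (Fin N → Fin N → ℝ) → (Fin K → Fin N → ℝ) → ℝ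
  | 0 => gibbs N K β h t q A
  | j + 1 => fun Jc Js =>
      if hj : j < K then
        ∫ g : Fin N → ℝ,
          fWeight N K β h t q m (K - j) Jc (Function.update Js ⟨K - 1 - j, by omega⟩ g) *
            omT1 N K β h t q m A j Jc (Function.update Js ⟨K - 1 - j, by omega⟩ g)
          ∂gaussN N
      else omT1 N K β h t q m A j Jc Js

/-- `omT2 … A j` is the partially averaged two-replica state `Ω̃_{K-j}(A)`:
`Ω̃_K = Ω` and `Ω̃_{a-1}(·) = E_a (f_a Ω̃_a(·))`. -/
def omT2 (N K : ℕ) (β h t : ℝ) (q m : ℕ → ℝ) (A : (Fin N → Bool) → (Fin N → Bool) → ℝ) :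
    ℕ → (Fin N → Fin N → ℝ) → (Fin K → Fin N → ℝ) → ℝ
  | 0 => gibbs2 N K β h t q A
  | j + 1 => fun Jc Js =>
      if hj : j < K then
        ∫ g : Fin N → ℝ,
          fWeight N K β h t q m (K - j) Jc (Function.update Js ⟨K - 1 - j, by omega⟩ g) *
            omT2 N K β h t q m A j Jc (Function.update Js ⟨K - 1 - j, by omega⟩ g)
          ∂gaussN N
      else omT2 N K β h t q m A j Jc Js

/-- The deformed quenched average `⟨A⟩_a = E(f_1 ⋯ f_a Ω̃_a(A))` at interpolation
parameter `t`, for a function `A` of two replicas. -/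
def angA (N K : ℕ) (β h t : ℝ) (q m : ℕ → ℝ) (a : ℕ)
    (A : (Fin N → Bool) → (Fin N → Bool) → ℝ) : ℝ :=
  ∫ Jc, ∫ Js,
      (∏ b ∈ Finset.Icc 1 a, fWeight N K β h t q m b Jc Js) *
        omT2 N K β h t q m A (K - a) Jc Js
    ∂gaussS K N ∂gaussC N

/-! ## Zero temperature (ground state) objects -/

/-- The zero-temperature Parisi recursion: `parisiLevelBar K q m j` is `f̄(q_{K-j}, ·; x̄)`,
with final condition `f̄(q_K, y) = |y|`. -/
def parisiLevelBar (K : ℕ) (q m : ℕ → ℝ) : ℕ → ℝ → ℝ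
  | 0 => fun y => |y|
  | j + 1 => pStep (m (K - j)) (q (K - j) - q (K - j - 1)) (parisiLevelBar K q m j)

/-- A zero-temperature piecewise constant order parameter: nodes
`0 = q_0 ≤ … ≤ q_K = 1` and nondecreasing values `0 ≤ m̄_1 ≤ … ≤ m̄_K`
(no upper bound `1`), with the convention `m̄_0 = 0`. -/
structure ZeroTParam where
  K : ℕ
  hK : 1 ≤ K
  q : ℕ → ℝ
  m : ℕ → ℝ
  hq0 : q 0 = 0
  hqK : q K = 1
  hq_mono : ∀ a, a < K → q a ≤ q (a + 1)
  hm0 : m 0 = 0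
  hm1 : 0 ≤ m 1
  hm_mono : ∀ a, 1 ≤ a → a < K → m a ≤ m (a + 1)

/-- The zero-temperature trial function `α̃(h; x̄) = f̄(0, h; x̄) - (1/2) ∫₀¹ r x̄(r) dr`. -/
def gsTrial (K : ℕ) (q m : ℕ → ℝ) (h : ℝ) : ℝ :=
  parisiLevelBar K q m K h - 1 / 2 * ∫ r in (0 : ℝ)..1, r * xFun K q m r

/-! ## The p-spin model -/

/-- A piecewise constant functional order parameter on `[0, p/2]`:
`0 = q_0 ≤ … ≤ q_K = p/2` and `0 ≤ m_1 ≤ … ≤ m_K ≤ 1`. -/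
structure POrderParam (p : ℕ) where
  K : ℕ
  hK : 1 ≤ K
  q : ℕ → ℝ
  m : ℕ → ℝ
  hq0 : q 0 = 0
  hqK : q K = p / 2
  hq_mono : ∀ a, a < K → q a ≤ q (a + 1)
  hm1 : 0 ≤ m 1
  hm_mono : ∀ a, 1 ≤ a → a < K → m a ≤ m (a + 1)
  hmK : m K ≤ 1

/-- The p-spin Hamiltonian
`H_N(σ,h,J) = -(p!/(2N^{p-1}))^{1/2} ∑_{i_1<…<i_p} J_{i_1…i_p} σ_{i_1}⋯σ_{i_p} - h ∑_i σ_i`. -/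
def hamP (p N : ℕ) (h : ℝ) (J : Finset (Fin N) → ℝ) (σ : Fin N → Bool) : ℝ :=
  -Real.sqrt ((Nat.factorial p : ℝ) / (2 * (N : ℝ) ^ (p - 1))) *
      ∑ S ∈ Finset.powersetCard p (Finset.univ : Finset (Fin N)), J S * ∏ i ∈ S, spin (σ i)
    - h * ∑ i, spin (σ i)

/-- The p-spin partition function. -/
def ZP (p N : ℕ) (β h : ℝ) (J : Finset (Fin N) → ℝ) : ℝ :=
  ∑ σ : Fin N → Bool, Real.exp (-(β * hamP p N h J σ))

/-- The p-spin quenched average `N⁻¹ E log Z_N^{(p)}(β, h, J)`. -/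
def quenchedFEP (p N : ℕ) (β h : ℝ) : ℝ :=
  (N : ℝ)⁻¹ * ∫ J, Real.log (ZP p N β h J) ∂gaussP N

/-- The functional order parameter on `[0, p/2]` as a function. -/
def xFunP (p K : ℕ) (q m : ℕ → ℝ) (r : ℝ) : ℝ :=
  if (p : ℝ) / 2 ≤ r then m K else m (sInf {a : ℕ | r < q a})

/-- The change of variables `q̄(r)` defined by `2r = p q̄^{p-1}`. -/
def qBar (p : ℕ) (r : ℝ) : ℝ := (2 * r / p) ^ (((p : ℝ) - 1)⁻¹)

/-- The p-spin trial function
`ᾱ_p(β, h; x) = log 2 + f(0, h; x, β) - (β²/2) ∫₀^{p/2} q̄(r) x(r) dr`. -/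
def trialAlphaP (p K : ℕ) (q m : ℕ → ℝ) (β h : ℝ) : ℝ :=
  Real.log 2 + parisiLevel K q m β K h
    - β ^ 2 / 2 * ∫ r in (0 : ℝ)..((p : ℝ) / 2), qBar p r * xFunP p K q m r

/-! ## Auxiliary lemmas -/

lemma spin_abs (b : Bool) : |spin b| = 1 := by
  unfold spin; split_ifs <;> simp

lemma spin2_abs (b c : Bool) : |spin b * spin c| = 1 := by
  rw [abs_mul, spin_abs, spin_abs, one_mul]

/-- The `ℓ¹` norm of a row. -/
def gOne {N : ℕ} (g : Fin N → ℝ) : ℝ := ∑ i, |g i|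

/-- The `ℓ¹` norm of the fields. -/
def sOne {K N : ℕ} (Js : Fin K → Fin N → ℝ) : ℝ := ∑ a, gOne (Js a)

lemma gOne_nonneg {N : ℕ} (g : Fin N → ℝ) : 0 ≤ gOne g :=
  Finset.sum_nonneg fun _ _ => abs_nonneg _

lemma sOne_update_le {K N : ℕ} (Js : Fin K → Fin N → ℝ) (a : Fin K) (g : Fin N → ℝ) :
    sOne (Function.update Js a g) ≤ sOne Js + gOne g := by
  have h : ∀ b, gOne (Function.update Js a g b) ≤ gOne (Js b) + if b = a then gOne g else 0 := by
    intro b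
    by_cases hb : b = a
    · subst hb; simp [gOne_nonneg]
    · simp [hb]
  calc sOne (Function.update Js a g) ≤ ∑ b, (gOne (Js b) + if b = a then gOne g else 0) :=
        Finset.sum_le_sum fun b _ => h b
    _ = sOne Js + gOne g := by
        rw [Finset.sum_add_distrib]; simp [sOne]

lemma integrable_exp_gOne (N : ℕ) (r : ℝ) :
    Integrable (fun g : Fin N → ℝ => Real.exp (r * gOne g)) (gaussN N) := by
  have h1 : Integrable (fun x : ℝ => Real.exp (r * |x|)) stdGauss := by
    unfold stdGauss
    exact integrable_exp_mul_abs (X := fun x => x) (integrable_exp_mul_gaussianReal r)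
      (integrable_exp_mul_gaussianReal (-r))
  have h2 := Integrable.fintype_prod (ι := Fin N) (μ := fun _ => stdGauss)
    (f := fun _ x => Real.exp (r * |x|)) (fun _ => h1)
  unfold gaussN
  refine h2.congr (Eventually.of_forall fun g => ?_)
  simp [gOne, Finset.mul_sum, Real.exp_sum]

lemma measurable_update_row {K N : ℕ} (a : Fin K) :
    Measurable (fun p : (Fin K → Fin N → ℝ) × (Fin N → ℝ) => Function.update p.1 a p.2) := by
  refine measurable_pi_lambda _ fun b => ?_
  by_cases hb : b = a
  · subst hb; simpa using measurable_snd
  · simp only [Function.update_of_ne hb]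
    exact (measurable_pi_apply b).comp measurable_fst

lemma coupling_sum {N : ℕ} (i j : Fin N) (hij : i < j) (Jc : Fin N → Fin N → ℝ)
    (s : Fin N → ℝ) (u : ℝ) :
    (∑ k, ∑ l, (if k < l then
        Function.update Jc i (Function.update (Jc i) j u) k l * s k * s l else 0))
      = (∑ k, ∑ l, (if k < l then Jc k l * s k * s l else 0))
        + (u - Jc i j) * (s i * s j) := by
  rw [← sub_eq_iff_eq_add', ← Finset.sum_sub_distrib]
  rw [Finset.sum_eq_single i]
  · rw [← Finset.sum_sub_distrib, Finset.sum_eq_single j]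
    · simp [hij]; ring
    · intro l _ hl
      simp [hl]
    · simp
  · intro k _ hk
    simp [hk]
  · simp

lemma bFac_path (N K : ℕ) (β h t : ℝ) (q : ℕ → ℝ) (i j : Fin N) (hij : i < j)
    (Jc : Fin N → Fin N → ℝ) (Js : Fin K → Fin N → ℝ) (σ : Fin N → Bool) (u : ℝ) :
    bFac N K β h t q (Function.update Jc i (Function.update (Jc i) j u)) Js σ =
      Real.exp (β * Real.sqrt (t / N) * (u - Jc i j) * (spin (σ i) * spin (σ j))) *
        bFac N K β h t q Jc Js σ := by
  unfold bFac
  rw [← Real.exp_add, coupling_sum i j hij Jc (fun k => spin (σ k)) u]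
  congr 1; ring

lemma bFac_pos (N K : ℕ) (β h t : ℝ) (q : ℕ → ℝ) (Jc : Fin N → Fin N → ℝ)
    (Js : Fin K → Fin N → ℝ) (σ : Fin N → Bool) : 0 < bFac N K β h t q Jc Js σ :=
  Real.exp_pos _

lemma Ztil_pos (N K : ℕ) (β h t : ℝ) (q : ℕ → ℝ) (Jc : Fin N → Fin N → ℝ)
    (Js : Fin K → Fin N → ℝ) : 0 < Ztil N K β h t q Jc Js :=
  Finset.sum_pos (fun _ _ => bFac_pos ..) Finset.univ_nonempty

lemma bFac_measurable (N K : ℕ) (β h t : ℝ) (q : ℕ → ℝ) (Jc : Fin N → Fin N → ℝ)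
    (σ : Fin N → Bool) : Measurable fun Js => bFac N K β h t q Jc Js σ := by
  unfold bFac
  have : Continuous fun Js : Fin K → Fin N → ℝ =>
      ∑ a : Fin K, Real.sqrt (q (a.val + 1) - q a.val) * ∑ i, Js a i * spin (σ i) := by
    fun_prop
  have := this.measurable
  fun_prop

lemma field_bound {K N : ℕ} (b : ℝ) (r : Fin K → ℝ) (hr : ∀ a, 0 ≤ r a)
    (Js : Fin K → Fin N → ℝ) (s : Fin N → ℝ) (hs : ∀ i, |s i| = 1) :
    |b * ∑ a, r a * ∑ i, Js a i * s i| ≤ (|b| * ∑ a, r a) * sOne Js := by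
  rw [abs_mul, mul_assoc]
  refine mul_le_mul_of_nonneg_left ?_ (abs_nonneg b)
  rw [sOne, Finset.mul_sum]
  refine (Finset.abs_sum_le_sum_abs _ _).trans (Finset.sum_le_sum fun a _ => ?_)
  rw [abs_mul, abs_of_nonneg (hr a)]
  refine mul_le_mul (Finset.single_le_sum (fun b _ => hr b) (Finset.mem_univ a)) ?_
    (abs_nonneg _) (Finset.sum_nonneg fun b _ => hr b)
  refine (Finset.abs_sum_le_sum_abs _ _).trans (Finset.sum_le_sum fun k _ => ?_)
  rw [abs_mul, hs, mul_one]

lemma bFac_bounds (N K : ℕ) (β h t : ℝ) (q : ℕ → ℝ) (Jc : Fin N → Fin N → ℝ) :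
    ∃ C D : ℝ, 0 ≤ D ∧ ∀ (Js : Fin K → Fin N → ℝ) (σ : Fin N → Bool),
      Real.exp (-(C + D * sOne Js)) ≤ bFac N K β h t q Jc Js σ ∧
      bFac N K β h t q Jc Js σ ≤ Real.exp (C + D * sOne Js) := by
  set A : (Fin N → Bool) → ℝ := fun σ => β * Real.sqrt (t / N) *
        ∑ i, ∑ j, (if i < j then Jc i j * spin (σ i) * spin (σ j) else 0)
      + β * h * ∑ i, spin (σ i) with hA
  refine ⟨∑ σ, |A σ|, |β * Real.sqrt (1 - t)| *
    ∑ a : Fin K, Real.sqrt (q (a.val + 1) - q a.val),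
    mul_nonneg (abs_nonneg _) (Finset.sum_nonneg fun _ _ => Real.sqrt_nonneg _), ?_⟩
  intro Js σ
  have h1 : |A σ| ≤ ∑ σ, |A σ| :=
    Finset.single_le_sum (f := fun σ => |A σ|) (fun _ _ => abs_nonneg _) (Finset.mem_univ σ)
  have h2 := field_bound (β * Real.sqrt (1 - t))
    (fun a : Fin K => Real.sqrt (q (a.val + 1) - q a.val)) (fun _ => Real.sqrt_nonneg _) Js
    (fun i => spin (σ i)) (fun i => spin_abs _)
  have h1' := abs_le.1 h1
  have h2' := abs_le.1 h2
  have h3 : bFac N K β h t q Jc Js σ = Real.exp (A σ + β * Real.sqrt (1 - t) *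
          ∑ a : Fin K, Real.sqrt (q (a.val + 1) - q a.val) * ∑ i, Js a i * spin (σ i)) := rfl
  rw [h3]
  constructor
  · apply Real.exp_le_exp.2; linarith [h1'.1, h2'.1]
  · apply Real.exp_le_exp.2; linarith [h1'.2, h2'.2]

lemma Ztil_bounds (N K : ℕ) (β h t : ℝ) (q : ℕ → ℝ) (i j : Fin N) (hij : i < j)
    (Jc : Fin N → Fin N → ℝ) :
    ∃ C D : ℝ, 0 ≤ D ∧ ∀ u ∈ Metric.ball (Jc i j) 1, ∀ (Js : Fin K → Fin N → ℝ),
      Real.exp (-(C + D * sOne Js)) ≤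
        Ztil N K β h t q (Function.update Jc i (Function.update (Jc i) j u)) Js ∧
      Ztil N K β h t q (Function.update Jc i (Function.update (Jc i) j u)) Js
        ≤ Real.exp (C + D * sOne Js) := by
  obtain ⟨C, D, hD, hb⟩ := bFac_bounds N K β h t q Jc
  set c := β * Real.sqrt (t / N) with hc
  set n : ℝ := ((Finset.univ : Finset (Fin N → Bool)).card : ℝ) with hn
  have hn1 : 1 ≤ n := by
    rw [hn]; exact_mod_cast Finset.card_pos.2 Finset.univ_nonempty
  have hlog : 0 ≤ Real.log n := Real.log_nonneg hn1
  refine ⟨C + |c| + Real.log n, D, hD, ?_⟩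
  intro u hu Js
  have hu' : |u - Jc i j| ≤ 1 := by
    rw [Metric.mem_ball, Real.dist_eq] at hu; exact hu.le
  have hx : ∀ σ : Fin N → Bool, |c * (u - Jc i j) * (spin (σ i) * spin (σ j))| ≤ |c| := by
    intro σ
    rw [abs_mul, spin2_abs, mul_one, abs_mul]
    exact mul_le_of_le_one_right (abs_nonneg _) hu'
  have key : ∀ σ, Real.exp (-(C + |c| + D * sOne Js)) ≤
        bFac N K β h t q (Function.update Jc i (Function.update (Jc i) j u)) Js σ ∧
      bFac N K β h t q (Function.update Jc i (Function.update (Jc i) j u)) Js σ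
        ≤ Real.exp (C + |c| + D * sOne Js) := by
    intro σ
    rw [bFac_path _ _ _ _ _ _ _ _ hij]
    have h1 := abs_le.1 (hx σ)
    constructor
    · calc Real.exp (-(C + |c| + D * sOne Js)) = Real.exp (-|c|) * Real.exp (-(C + D * sOne Js)) := by
            rw [← Real.exp_add]; congr 1; ring
        _ ≤ _ := mul_le_mul (Real.exp_le_exp.2 h1.1) (hb Js σ).1 (Real.exp_pos _).le
            (Real.exp_pos _).le
    · calc _ ≤ Real.exp (|c|) * Real.exp (C + D * sOne Js) :=
            mul_le_mul (Real.exp_le_exp.2 h1.2) (hb Js σ).2 (bFac_pos ..).le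
            (Real.exp_pos _).le
        _ = _ := by rw [← Real.exp_add]; congr 1; ring
  constructor
  · calc _ ≤ Real.exp (-(C + |c| + D * sOne Js)) := Real.exp_le_exp.2 (by linarith)
      _ ≤ _ := (key (fun _ => true)).1
      _ ≤ _ := Finset.single_le_sum (f := fun σ => bFac N K β h t q
          (Function.update Jc i (Function.update (Jc i) j u)) Js σ)
          (fun _ _ => (bFac_pos ..).le) (Finset.mem_univ _)
  · calc _ ≤ n * Real.exp (C + |c| + D * sOne Js) := by
          have := Finset.sum_le_card_nsmul Finset.univ _ _ (fun σ _ => (key σ).2)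
          rw [nsmul_eq_mul] at this
          exact this
      _ = _ := by
          nth_rewrite 1 [← Real.exp_log (show 0 < n by linarith)]
          rw [← Real.exp_add]; congr 1; ring

lemma Wrec_succ (N K : ℕ) (β h t : ℝ) (q m : ℕ → ℝ) (n : ℕ) (hn : n < K)
    (Jc : Fin N → Fin N → ℝ) (Js : Fin K → Fin N → ℝ) :
    Wrec N K β h t q m (n + 1) Jc Js =
      (∫ g : Fin N → ℝ,
        (Wrec N K β h t q m n Jc (Function.update Js ⟨K - 1 - n, by omega⟩ g)) ^ m (K - n)
          ∂gaussN N) ^ (m (K - n))⁻¹ := by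
  simp [Wrec, hn]

lemma Wrec_measurable (N K : ℕ) (β h t : ℝ) (q m : ℕ → ℝ) (Jc : Fin N → Fin N → ℝ) (n : ℕ) :
    Measurable (Wrec N K β h t q m n Jc) := by
  induction n with
  | zero =>
    have : Wrec N K β h t q m 0 Jc = fun Js => ∑ σ, bFac N K β h t q Jc Js σ := rfl
    rw [this]
    exact Finset.measurable_fun_sum _ fun σ _ => bFac_measurable ..
  | succ n ih =>
    by_cases hn : n < K
    · have : Wrec N K β h t q m (n + 1) Jc = fun Js => _ :=
        funext fun Js => Wrec_succ N K β h t q m n hn Jc Js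
      rw [this]
      refine Measurable.pow_const ?_ _
      have h1 := (ih.comp (measurable_update_row (⟨K - 1 - n, by omega⟩ : Fin K))).pow_const
        (m (K - n))
      exact (h1.stronglyMeasurable.integral_prod_right' (ν := gaussN N)).measurable
    · have : Wrec N K β h t q m (n + 1) Jc = Wrec N K β h t q m n Jc := by
        funext Js; simp [Wrec, hn]
      rw [this]; exact ih

/-- Integral of a power between exponential bounds. -/
lemma step_integrable (N : ℕ) (W : (Fin N → ℝ) → ℝ) (hW : Measurable W) (p C D : ℝ)
    (hp : 0 < p)
    (hlo : ∀ g, 0 < W g) (hhi : ∀ g, W g ≤ Real.exp (C + D * gOne g)) :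
    Integrable (fun g => W g ^ p) (gaussN N) := by
  refine ((integrable_exp_gOne N (p * D)).const_mul (Real.exp (p * C))).mono'
    (hW.pow_const p).aestronglyMeasurable (Eventually.of_forall fun g => ?_)
  rw [Real.norm_of_nonneg (Real.rpow_nonneg (hlo g).le _), ← Real.exp_add]
  calc W g ^ p ≤ (Real.exp (C + D * gOne g)) ^ p := Real.rpow_le_rpow (hlo g).le (hhi g) hp.le
    _ = _ := by rw [← Real.exp_mul]; congr 1; ring

lemma integral_exp_gOne_pos (N : ℕ) (r : ℝ) :
    0 < ∫ g : Fin N → ℝ, Real.exp (r * gOne g) ∂gaussN N :=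
  integral_exp_pos (integrable_exp_gOne N r)

lemma Wrec_bounds (N K : ℕ) (β h t : ℝ) (q m : ℕ → ℝ)
    (hm : ∀ b, 1 ≤ b → b ≤ K → 0 < m b) (i j : Fin N) (hij : i < j)
    (Jc : Fin N → Fin N → ℝ) (n : ℕ) (hn : n ≤ K) :
    ∃ C D : ℝ, 0 ≤ D ∧ ∀ u ∈ Metric.ball (Jc i j) 1, ∀ (Js : Fin K → Fin N → ℝ),
      Real.exp (-(C + D * sOne Js)) ≤
        Wrec N K β h t q m n (Function.update Jc i (Function.update (Jc i) j u)) Js ∧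
      Wrec N K β h t q m n (Function.update Jc i (Function.update (Jc i) j u)) Js
        ≤ Real.exp (C + D * sOne Js) := by
  induction n with
  | zero => exact Ztil_bounds N K β h t q i j hij Jc
  | succ n ih =>
    obtain ⟨C, D, hD, hb⟩ := ih (by omega)
    have hnK : n < K := hn
    have hp : 0 < m (K - n) := hm _ (by omega) (by omega)
    set p := m (K - n) with hpdef
    set M := ∫ g : Fin N → ℝ, Real.exp (p * D * gOne g) ∂gaussN N with hM
    set M' := ∫ g : Fin N → ℝ, Real.exp (-(p * D) * gOne g) ∂gaussN N with hM'
    have hMp : 0 < M := integral_exp_gOne_pos N _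
    have hMp' : 0 < M' := integral_exp_gOne_pos N _
    refine ⟨C + |p⁻¹ * Real.log M| + |p⁻¹ * Real.log M'|, D, hD, ?_⟩
    intro u hu Js
    rw [Wrec_succ N K β h t q m n hnK]
    set Ju := Function.update Jc i (Function.update (Jc i) j u)
    set W : (Fin N → ℝ) → ℝ := fun g =>
      Wrec N K β h t q m n Ju (Function.update Js ⟨K - 1 - n, by omega⟩ g) with hWdef
    have hup : ∀ g : Fin N → ℝ, D * sOne (Function.update Js (⟨K - 1 - n, by omega⟩ : Fin K) g)
        ≤ D * sOne Js + D * gOne g := fun g => by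
      rw [← mul_add]; exact mul_le_mul_of_nonneg_left (sOne_update_le _ _ _) hD
    have hhi : ∀ g, W g ≤ Real.exp ((C + D * sOne Js) + D * gOne g) := fun g =>
      (hb u hu _).2.trans (Real.exp_le_exp.2 (by linarith [hup g]))
    have hlo : ∀ g, Real.exp (-((C + D * sOne Js) + D * gOne g)) ≤ W g := fun g =>
      (Real.exp_le_exp.2 (by linarith [hup g])).trans (hb u hu _).1
    have hpos : ∀ g, 0 < W g := fun g => (Real.exp_pos _).trans_le (hlo g)
    have hWm : Measurable W :=
      (Wrec_measurable N K β h t q m Ju n).comp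
        ((measurable_update_row _).comp measurable_prodMk_left)
    have hint := step_integrable N W hWm p _ D hp hpos hhi
    have hIhi : ∫ g, W g ^ p ∂gaussN N ≤ Real.exp (p * (C + D * sOne Js)) * M := by
      rw [hM, ← integral_const_mul]
      refine integral_mono hint ((integrable_exp_gOne N _).const_mul _) fun g => ?_
      calc W g ^ p ≤ (Real.exp ((C + D * sOne Js) + D * gOne g)) ^ p :=
            Real.rpow_le_rpow (hpos g).le (hhi g) hp.le
        _ = _ := by rw [← Real.exp_mul, ← Real.exp_add]; congr 1; ring
    have hIlo : Real.exp (-(p * (C + D * sOne Js))) * M' ≤ ∫ g, W g ^ p ∂gaussN N := by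
      rw [hM', ← integral_const_mul]
      refine integral_mono ((integrable_exp_gOne N _).const_mul _) hint fun g => ?_
      calc _ = (Real.exp (-((C + D * sOne Js) + D * gOne g))) ^ p := by
            rw [← Real.exp_mul, ← Real.exp_add]; congr 1; ring
        _ ≤ W g ^ p := Real.rpow_le_rpow (Real.exp_pos _).le (hlo g) hp.le
    have hI0 : 0 < ∫ g, W g ^ p ∂gaussN N := lt_of_lt_of_le (by positivity) hIlo
    have l1 := neg_abs_le (p⁻¹ * Real.log M)
    have l2 := le_abs_self (p⁻¹ * Real.log M)
    have l3 := neg_abs_le (p⁻¹ * Real.log M')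
    have l4 := le_abs_self (p⁻¹ * Real.log M')
    constructor
    · calc _ ≤ Real.exp (-(C + D * sOne Js) + p⁻¹ * Real.log M') :=
            Real.exp_le_exp.2 (by linarith)
        _ = (Real.exp (-(p * (C + D * sOne Js))) * M') ^ p⁻¹ := by
            nth_rewrite 2 [← Real.exp_log hMp']
            rw [← Real.exp_add, ← Real.exp_mul]; congr 1; field_simp
        _ ≤ _ := Real.rpow_le_rpow (by positivity) hIlo (inv_pos.2 hp).le
    · calc _ ≤ (Real.exp (p * (C + D * sOne Js)) * M) ^ p⁻¹ :=
            Real.rpow_le_rpow hI0.le hIhi (inv_pos.2 hp).le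
        _ = Real.exp ((C + D * sOne Js) + p⁻¹ * Real.log M) := by
            nth_rewrite 1 [← Real.exp_log hMp]
            rw [← Real.exp_add, ← Real.exp_mul]; congr 1; field_simp
        _ ≤ _ := Real.exp_le_exp.2 (by linarith)

lemma fWeight_measurable (N K : ℕ) (β h t : ℝ) (q m : ℕ → ℝ) (a : ℕ) (Jc : Fin N → Fin N → ℝ) :
    Measurable (fWeight N K β h t q m a Jc) := by
  unfold fWeight Zrec
  exact ((Wrec_measurable ..).pow_const _).div ((Wrec_measurable ..).pow_const _)

lemma omT1_succ (N K : ℕ) (β h t : ℝ) (q m : ℕ → ℝ) (A : (Fin N → Bool) → ℝ) (n : ℕ) (hn : n < K)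
    (Jc : Fin N → Fin N → ℝ) (Js : Fin K → Fin N → ℝ) :
    omT1 N K β h t q m A (n + 1) Jc Js =
      ∫ g : Fin N → ℝ,
          fWeight N K β h t q m (K - n) Jc (Function.update Js ⟨K - 1 - n, by omega⟩ g) *
            omT1 N K β h t q m A n Jc (Function.update Js ⟨K - 1 - n, by omega⟩ g)
          ∂gaussN N := by
  simp [omT1, hn]

lemma omT1_measurable (N K : ℕ) (β h t : ℝ) (q m : ℕ → ℝ) (A : (Fin N → Bool) → ℝ)
    (Jc : Fin N → Fin N → ℝ) (n : ℕ) :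
    Measurable (omT1 N K β h t q m A n Jc) := by
  induction n with
  | zero =>
    have : omT1 N K β h t q m A 0 Jc = fun Js =>
      (∑ σ, A σ * bFac N K β h t q Jc Js σ) / ∑ σ, bFac N K β h t q Jc Js σ := rfl
    rw [this]
    exact (Finset.measurable_fun_sum _ fun σ _ => (bFac_measurable ..).const_mul _).div
      (Finset.measurable_fun_sum _ fun σ _ => bFac_measurable ..)
  | succ n ih =>
    by_cases hn : n < K
    · have : omT1 N K β h t q m A (n + 1) Jc = fun Js => _ :=
        funext fun Js => omT1_succ N K β h t q m A n hn Jc Js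
      rw [this]
      have h1 := ((fWeight_measurable N K β h t q m (K - n) Jc).mul ih).comp
        (measurable_update_row (⟨K - 1 - n, by omega⟩ : Fin K))
      exact (h1.stronglyMeasurable.integral_prod_right' (ν := gaussN N)).measurable
    · have : omT1 N K β h t q m A (n + 1) Jc = omT1 N K β h t q m A n Jc := by
        funext Js; simp [omT1, hn]
      rw [this]; exact ih

/-- Summary of what holds at one step, in the ball. -/
lemma Wrec_step (N K : ℕ) (β h t : ℝ) (q m : ℕ → ℝ)
    (hm : ∀ b, 1 ≤ b → b ≤ K → 0 < m b) (i j : Fin N) (hij : i < j)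
    (Jc : Fin N → Fin N → ℝ) (n : ℕ) (hn : n < K) (Js : Fin K → Fin N → ℝ) :
    ∃ bd : (Fin N → ℝ) → ℝ, Integrable bd (gaussN N) ∧
      ∀ u ∈ Metric.ball (Jc i j) 1, ∀ g,
        0 < Wrec N K β h t q m n (Function.update Jc i (Function.update (Jc i) j u))
          (Function.update Js ⟨K - 1 - n, by omega⟩ g) ∧
        Wrec N K β h t q m n (Function.update Jc i (Function.update (Jc i) j u))
          (Function.update Js ⟨K - 1 - n, by omega⟩ g) ^ m (K - n) ≤ bd g := by
  obtain ⟨C, D, hD, hb⟩ := Wrec_bounds N K β h t q m hm i j hij Jc n hn.le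
  have hp : 0 < m (K - n) := hm _ (by omega) (by omega)
  refine ⟨_, ((integrable_exp_gOne N (m (K - n) * D)).const_mul
    (Real.exp (m (K - n) * (C + D * sOne Js)))), fun u hu g => ?_⟩
  have h0 := (Real.exp_pos _).trans_le
    (hb u hu (Function.update Js ⟨K - 1 - n, by omega⟩ g)).1
  refine ⟨h0, ?_⟩
  have hup : D * sOne (Function.update Js (⟨K - 1 - n, by omega⟩ : Fin K) g)
        ≤ D * (sOne Js + gOne g) := mul_le_mul_of_nonneg_left (sOne_update_le _ _ _) hD
  calc _ ≤ (Real.exp ((C + D * sOne Js) + D * gOne g)) ^ m (K - n) :=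
        Real.rpow_le_rpow h0.le ((hb u hu _).2.trans (Real.exp_le_exp.2 (by linarith))) hp.le
    _ = _ := by rw [← Real.exp_mul, ← Real.exp_add]; congr 1; ring

lemma Wrec_pos (N K : ℕ) (β h t : ℝ) (q m : ℕ → ℝ)
    (hm : ∀ b, 1 ≤ b → b ≤ K → 0 < m b) (i j : Fin N) (hij : i < j)
    (Jc : Fin N → Fin N → ℝ) (n : ℕ) (hn : n ≤ K) (Js : Fin K → Fin N → ℝ) :
    0 < Wrec N K β h t q m n Jc Js := by
  obtain ⟨C, D, hD, hb⟩ := Wrec_bounds N K β h t q m hm i j hij Jc n hn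
  have := (hb (Jc i j) (Metric.mem_ball_self one_pos) Js).1
  simp only [Function.update_eq_self] at this
  exact (Real.exp_pos _).trans_le this

lemma Wrec_integrable (N K : ℕ) (β h t : ℝ) (q m : ℕ → ℝ)
    (hm : ∀ b, 1 ≤ b → b ≤ K → 0 < m b) (i j : Fin N) (hij : i < j)
    (Jc : Fin N → Fin N → ℝ) (n : ℕ) (hn : n < K) (Js : Fin K → Fin N → ℝ) :
    Integrable (fun g => Wrec N K β h t q m n Jc
          (Function.update Js ⟨K - 1 - n, by omega⟩ g) ^ m (K - n)) (gaussN N) := by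
  obtain ⟨bd, hbd, hb⟩ := Wrec_step N K β h t q m hm i j hij Jc n hn Js
  have hb := hb (Jc i j) (Metric.mem_ball_self one_pos)
  simp only [Function.update_eq_self] at hb
  refine hbd.mono' ?_ (Eventually.of_forall fun g => ?_)
  · exact (((Wrec_measurable N K β h t q m Jc n).comp
        ((measurable_update_row _).comp measurable_prodMk_left)).pow_const _).aestronglyMeasurable
  · rw [Real.norm_of_nonneg (Real.rpow_nonneg (hb g).1.le _)]
    exact (hb g).2

lemma Wrec_integral_pos (N K : ℕ) (β h t : ℝ) (q m : ℕ → ℝ)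
    (hm : ∀ b, 1 ≤ b → b ≤ K → 0 < m b) (i j : Fin N) (hij : i < j)
    (Jc : Fin N → Fin N → ℝ) (n : ℕ) (hn : n < K) (Js : Fin K → Fin N → ℝ) :
    0 < ∫ g, Wrec N K β h t q m n Jc
          (Function.update Js ⟨K - 1 - n, by omega⟩ g) ^ m (K - n) ∂(gaussN N) := by
  have h1 := Wrec_pos N K β h t q m hm i j hij Jc (n + 1) hn Js
  have hp : 0 < m (K - n) := hm _ (by omega) (by omega)
  rw [Wrec_succ N K β h t q m n hn] at h1
  refine lt_of_le_of_ne (integral_nonneg fun g => Real.rpow_nonneg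
    (Wrec_pos N K β h t q m hm i j hij Jc n hn.le _).le _) fun h0 => ?_
  rw [← h0, Real.zero_rpow (inv_pos.2 hp).ne'] at h1
  exact lt_irrefl _ h1

lemma omT1_succ' (N K : ℕ) (β h t : ℝ) (q m : ℕ → ℝ)
    (hm : ∀ b, 1 ≤ b → b ≤ K → 0 < m b) (i j : Fin N) (hij : i < j)
    (A : (Fin N → Bool) → ℝ) (n : ℕ) (hn : n < K)
    (Jc : Fin N → Fin N → ℝ) (Js : Fin K → Fin N → ℝ) :
    omT1 N K β h t q m A (n + 1) Jc Js =
      (∫ g : Fin N → ℝ,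
          Wrec N K β h t q m n Jc (Function.update Js ⟨K - 1 - n, by omega⟩ g) ^ m (K - n) *
            omT1 N K β h t q m A n Jc (Function.update Js ⟨K - 1 - n, by omega⟩ g)
          ∂gaussN N) /
      ∫ g : Fin N → ℝ,
          Wrec N K β h t q m n Jc (Function.update Js ⟨K - 1 - n, by omega⟩ g) ^ m (K - n)
          ∂gaussN N := by
  have hp : 0 < m (K - n) := hm _ (by omega) (by omega)
  rw [omT1_succ N K β h t q m A n hn, ← integral_div]
  congr 1
  funext g
  unfold fWeight Zrec
  have e1 : K - (K - n) = n := by omega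
  have e2 : K - (K - n - 1) = n + 1 := by omega
  rw [e1, e2, Wrec_succ N K β h t q m n hn]
  simp only [Function.update_idem]
  rw [← Real.rpow_mul (Wrec_integral_pos N K β h t q m hm i j hij Jc n hn Js).le,
    inv_mul_cancel₀ hp.ne', Real.rpow_one]
  ring

lemma omT1_abs_le (N K : ℕ) (β h t : ℝ) (q m : ℕ → ℝ)
    (hm : ∀ b, 1 ≤ b → b ≤ K → 0 < m b) (i j : Fin N) (hij : i < j)
    (A : (Fin N → Bool) → ℝ) (hA : ∀ σ, |A σ| ≤ 1)
    (Jc : Fin N → Fin N → ℝ) (n : ℕ) (hn : n ≤ K) (Js : Fin K → Fin N → ℝ) :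
    |omT1 N K β h t q m A n Jc Js| ≤ 1 := by
  induction n generalizing Js with
  | zero =>
    change |(∑ σ, A σ * bFac N K β h t q Jc Js σ) / Ztil N K β h t q Jc Js| ≤ 1
    have hZ := Ztil_pos N K β h t q Jc Js
    rw [abs_div, abs_of_pos hZ, div_le_one hZ]
    refine (Finset.abs_sum_le_sum_abs _ _).trans (Finset.sum_le_sum fun σ _ => ?_)
    rw [abs_mul, abs_of_pos (bFac_pos ..)]
    exact mul_le_of_le_one_left (bFac_pos ..).le (hA σ)
  | succ n ih =>
    have hI := Wrec_integral_pos N K β h t q m hm i j hij Jc n hn Js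
    rw [omT1_succ' N K β h t q m hm i j hij A n hn, abs_div, abs_of_pos hI, div_le_one hI]
    refine (abs_integral_le_integral_abs).trans ?_
    refine integral_mono_of_nonneg (Eventually.of_forall fun g => abs_nonneg _)
      (Wrec_integrable N K β h t q m hm i j hij Jc n hn Js) (Eventually.of_forall fun g => ?_)
    have h0 := Real.rpow_nonneg (Wrec_pos N K β h t q m hm i j hij Jc n (Nat.le_of_succ_le hn)
      (Function.update Js ⟨K - 1 - n, by omega⟩ g)).le (m (K - n))
    simp only [abs_mul, abs_of_nonneg h0]
    exact mul_le_of_le_one_right h0 (ih (by omega) _)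

lemma rpow_deriv_aux {f : ℝ → ℝ} {c w u p : ℝ} (hf : HasDerivAt f (c * f u * w) u)
    (h0 : 0 < f u) : HasDerivAt (fun v => f v ^ p) (p * c * (f u ^ p * w)) u := by
  have := hf.rpow_const (p := p) (Or.inl h0.ne')
  convert this using 1
  rw [Real.rpow_sub_one h0.ne']
  field_simp

lemma Wrec_hasDerivAt (N K : ℕ) (β h t : ℝ) (q m : ℕ → ℝ)
    (hm : ∀ b, 1 ≤ b → b ≤ K → 0 < m b) (i j : Fin N) (hij : i < j)
    (Jc : Fin N → Fin N → ℝ) (n : ℕ) (hn : n ≤ K) (Js : Fin K → Fin N → ℝ) :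
    HasDerivAt
      (fun u => Wrec N K β h t q m n (Function.update Jc i (Function.update (Jc i) j u)) Js)
      (β * Real.sqrt (t / N) * Wrec N K β h t q m n Jc Js *
        omT1 N K β h t q m (fun σ => spin (σ i) * spin (σ j)) n Jc Js) (Jc i j) := by
  induction n generalizing Js Jc with
  | zero =>
    have e : (fun u => Wrec N K β h t q m 0
        (Function.update Jc i (Function.update (Jc i) j u)) Js) = fun u => ∑ σ,
        Real.exp (β * Real.sqrt (t / N) * (u - Jc i j) * (spin (σ i) * spin (σ j))) *
        bFac N K β h t q Jc Js σ := by
      funext u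
      exact Finset.sum_congr rfl fun σ _ => bFac_path N K β h t q i j hij Jc Js σ u
    rw [e]
    have hd : HasDerivAt (fun u => ∑ σ : Fin N → Bool,
        Real.exp (β * Real.sqrt (t / N) * (u - Jc i j) * (spin (σ i) * spin (σ j))) *
        bFac N K β h t q Jc Js σ)
        (∑ σ : Fin N → Bool, (β * Real.sqrt (t / N)) * ((spin (σ i) * spin (σ j)) *
        bFac N K β h t q Jc Js σ)) (Jc i j) := by
      refine HasDerivAt.fun_sum fun σ _ => ?_
      have h1 := (((((hasDerivAt_id (Jc i j)).sub_const (Jc i j)).const_mul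
        (β * Real.sqrt (t / N))).mul_const (spin (σ i) * spin (σ j))).exp).mul_const
        (bFac N K β h t q Jc Js σ)
      refine HasDerivAt.congr_deriv h1 ?_
      simp; ring
    convert hd using 1
    change _ * Ztil N K β h t q Jc Js * (_ / Ztil N K β h t q Jc Js) = _
    have hZ := (Ztil_pos N K β h t q Jc Js).ne'
    rw [← Finset.mul_sum]
    field_simp
  | succ n ih =>
    have hnK : n < K := hn
    have hp : 0 < m (K - n) := hm _ (by omega) (by omega)
    obtain ⟨bd, hbd, hb⟩ := Wrec_step N K β h t q m hm i j hij Jc n hnK Js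
    have hI := Wrec_integral_pos N K β h t q m hm i j hij Jc n hnK Js
    set A : (Fin N → Bool) → ℝ := fun σ => spin (σ i) * spin (σ j) with hA
    have hA1 : ∀ σ, |A σ| ≤ 1 := fun σ => (spin2_abs _ _).le
    set c := β * Real.sqrt (t / N) with hc
    set p := m (K - n) with hpd
    set P : ℝ → Fin N → Fin N → ℝ := fun u =>
      Function.update Jc i (Function.update (Jc i) j u) with hP
    have hP0 : P (Jc i j) = Jc := by simp [hP]
    have hmeasW : ∀ J, Measurable fun g : Fin N → ℝ =>
        Wrec N K β h t q m n J (Function.update Js ⟨K - 1 - n, by omega⟩ g) ^ p := fun J =>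
      ((Wrec_measurable N K β h t q m J n).comp
        ((measurable_update_row _).comp measurable_prodMk_left)).pow_const _
    have hmeasO : ∀ J, Measurable fun g : Fin N → ℝ =>
        omT1 N K β h t q m A n J (Function.update Js ⟨K - 1 - n, by omega⟩ g) := fun J =>
      ((omT1_measurable N K β h t q m A J n).comp
        ((measurable_update_row _).comp measurable_prodMk_left))
    have hder : ∀ u (Js' : Fin K → Fin N → ℝ),
        HasDerivAt (fun v => Wrec N K β h t q m n (P v) Js')
          (c * Wrec N K β h t q m n (P u) Js' * omT1 N K β h t q m A n (P u) Js') u := by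
      intro u Js'
      have := ih (P u) (by omega) Js'
      have e1 : P u i j = u := by simp [hP]
      have e2 : ∀ v, Function.update (P u) i (Function.update (P u i) j v) = P v := by
        intro v; simp [hP]
      simp only [e1, e2] at this
      exact this
    have main := (hasDerivAt_integral_of_dominated_loc_of_deriv_le (μ := gaussN N)
      (F := fun u g => Wrec N K β h t q m n (P u)
        (Function.update Js ⟨K - 1 - n, by omega⟩ g) ^ p)
      (F' := fun u g => p * c * (Wrec N K β h t q m n (P u)
        (Function.update Js ⟨K - 1 - n, by omega⟩ g) ^ p *
        omT1 N K β h t q m A n (P u) (Function.update Js ⟨K - 1 - n, by omega⟩ g)))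
      (bound := fun g => |p * c| * bd g)
      (Metric.ball_mem_nhds (Jc i j) one_pos)
      (Eventually.of_forall fun u => (hmeasW (P u)).aestronglyMeasurable)
      (Wrec_integrable N K β h t q m hm i j hij (P (Jc i j)) n hnK Js)
      (((hmeasW _).mul (hmeasO _)).const_mul _).aestronglyMeasurable
      (Eventually.of_forall fun g u hu => by
        have h1 := hb u hu g
        have h0 := Real.rpow_nonneg h1.1.le p
        rw [Real.norm_eq_abs, abs_mul, abs_mul _ (omT1 _ _ _ _ _ _ _ _ _ _ _), abs_of_nonneg h0]
        refine mul_le_mul_of_nonneg_left ?_ (abs_nonneg _)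
        exact (mul_le_of_le_one_right h0
          (omT1_abs_le N K β h t q m hm i j hij A hA1 _ n hnK.le _)).trans h1.2)
      (hbd.const_mul _)
      (Eventually.of_forall fun g u hu => rpow_deriv_aux (hder u _) (hb u hu g).1)).2
    have hI' : (0 : ℝ) < ∫ g, Wrec N K β h t q m n (P (Jc i j))
        (Function.update Js ⟨K - 1 - n, by omega⟩ g) ^ p ∂gaussN N := by rw [hP0]; exact hI
    have fin := main.rpow_const (p := p⁻¹) (Or.inl hI'.ne')
    have e3 : (fun u => Wrec N K β h t q m (n + 1) (P u) Js) = fun u =>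
        (∫ g, Wrec N K β h t q m n (P u)
        (Function.update Js ⟨K - 1 - n, by omega⟩ g) ^ p ∂gaussN N) ^ p⁻¹ := by
      funext u; exact Wrec_succ N K β h t q m n hnK _ _
    change HasDerivAt (fun u => Wrec N K β h t q m (n + 1) (P u) Js) _ _
    rw [e3]
    refine fin.congr_deriv ?_
    rw [hP0, Real.rpow_sub_one hI.ne', integral_const_mul,
      omT1_succ' N K β h t q m hm i j hij A n hnK, Wrec_succ N K β h t q m n hnK, ← hpd]
    have hI2 := hI.ne'
    field_simp

/-- for every level `a ∈ {1, …, K}` (with `m_a > 0`) and sites `i < j`,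
for each fixed realization of the disorder,
`∂_{J_{ij}} f_a = β √(t/N) m_a f_a (ω̃_a(σ_i σ_j) − ω̃_{a−1}(σ_i σ_j))`,
where `ω̃_b = omT1 … (K − b)` are the partially averaged Gibbs states. -/
theorem fWeight_coupling_deriv (N : ℕ) (hN : 1 ≤ N) (X : OrderParam)
    (hm : ∀ b, 1 ≤ b → b ≤ X.K → 0 < X.m b) (β h t : ℝ) (hβ : 0 ≤ β)
    (ht : t ∈ Set.Ioo (0 : ℝ) 1) (a : ℕ) (ha1 : 1 ≤ a) (haK : a ≤ X.K)
    (i j : Fin N) (hij : i < j)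
    (Jc : Fin N → Fin N → ℝ) (Js : Fin X.K → Fin N → ℝ) :
    HasDerivAt
      (fun u => fWeight N X.K β h t X.q X.m a
        (Function.update Jc i (Function.update (Jc i) j u)) Js)
      (β * Real.sqrt (t / N) * X.m a * fWeight N X.K β h t X.q X.m a Jc Js *
        (omT1 N X.K β h t X.q X.m (fun σ => spin (σ i) * spin (σ j)) (X.K - a) Jc Js
          - omT1 N X.K β h t X.q X.m (fun σ => spin (σ i) * spin (σ j)) (X.K - (a - 1)) Jc Js))
      (Jc i j) := by
  have e1 : X.K - (a - 1) = (X.K - a) + 1 := by omega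
  have d1 := Wrec_hasDerivAt N X.K β h t X.q X.m hm i j hij Jc (X.K - a) (by omega) Js
  have d2 := Wrec_hasDerivAt N X.K β h t X.q X.m hm i j hij Jc (X.K - (a - 1)) (by omega) Js
  have p1 := Wrec_pos N X.K β h t X.q X.m hm i j hij Jc (X.K - a) (by omega) Js
  have p2 := Wrec_pos N X.K β h t X.q X.m hm i j hij Jc (X.K - (a - 1)) (by omega) Js
  have e0 : Function.update Jc i (Function.update (Jc i) j (Jc i j)) = Jc := by simp
  have r1 := rpow_deriv_aux (p := X.m a)
    (f := fun u => Wrec N X.K β h t X.q X.m (X.K - a)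
      (Function.update Jc i (Function.update (Jc i) j u)) Js) (u := Jc i j)
    (by simpa only [e0] using d1) (by simpa only [e0] using p1)
  have r2 := rpow_deriv_aux (p := X.m a)
    (f := fun u => Wrec N X.K β h t X.q X.m (X.K - (a - 1))
      (Function.update Jc i (Function.update (Jc i) j u)) Js) (u := Jc i j)
    (by simpa only [e0] using d2) (by simpa only [e0] using p2)
  have q2 := (Real.rpow_pos_of_pos p2 (X.m a)).ne'
  have fin := r1.fun_div r2 (by simpa only [e0] using q2)
  refine fin.congr_deriv ?_
  simp only [e0]
  unfold fWeight Zrec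
  field_simp

end
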